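/- arXiv:1110.5369 — 2 statements merged into one kernel-verified Lean document; each statement's English description precedes it below -/
import Mathlib

section
/- Let 𝓘 ⊆ ℚ[e_1,…,e_n,u] be the ideal generated by: (1) e_i(e_i − u) for all i; (2) ∏_{i∈S⁺} e_i · ∏_{j∈S⁻} (e_j − u) for all disjoint S⁺, S⁻ ⊆ {1,…,n} with ⋂_{i∈S⁺} H_i⁺ ∩ ⋂_{j∈S⁻} H_j⁻ = ∅; (3) the polynomial q_{S⁺,S⁻} satisfying u·q_{S⁺,S⁻} = ∏_{i∈S⁺} e_i · ∏_{j∈S⁻} (e_j − u) − ∏_{i∈S⁺} (e_i − u) · ∏_{j∈S⁻} e_j, for all disjoint S⁺, S⁻ with ⋂_{i∈S⁺} H_i⁺ ∩ ⋂_{j∈S⁻} H_j⁻ = ∅ and ⋂_{i∈S⁺∪S⁻} H_i ≠ ∅. Then (a) the evaluation u ↦ 0 induces a ℚ-algebra isomorphism ℚ[e_1,…,e_n,u]/(𝓘 + ⟨u⟩) ≅ B(𝒜), and (b) the evaluation u ↦ 1 induces a ℚ-algebra isomorphism ℚ[e_1,…,e_n,u]/(𝓘 + ⟨u − 1⟩)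 ≅ H⁰(M_1(𝒜)), where the generator e_i maps to the Heaviside function x_i. -/
/-!
Statement 13: the two specializations `u ↦ 0` and `u ↦ 1` of the ideal `𝓘` in
`ℚ[e₁,…,eₙ,u]` (realized as `Polynomial (MvPolynomial (Fin n) ℚ)`, with
`e i = Polynomial.C (MvPolynomial.X i)` and `u = Polynomial.X`) recover `B(𝒜)` and
`H⁰(M₁(𝒜))` respectively.
-/

open MvPolynomial Set

variable {V : Type*} [NormedAddCommGroup V] [NormedSpace ℝ V] [FiniteDimensional ℝ V]
variable {n : ℕ}

/-- The complement `M₁(𝒜)` of the arrangement given by the affine forms `ω i`. -/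
def M₁ (ω : Fin n → V →ᵃ[ℝ] ℝ) : Set V := {v | ∀ i, ω i v ≠ 0}

/-- The hyperplane `H i`. -/
def Hyp (ω : Fin n → V →ᵃ[ℝ] ℝ) (i : Fin n) : Set V := {v | ω i v = 0}

/-- The open positive half-space `H i⁺`. -/
def Hplus (ω : Fin n → V →ᵃ[ℝ] ℝ) (i : Fin n) : Set V := {v | 0 < ω i v}

/-- The open negative half-space `H i⁻`. -/
def Hminus (ω : Fin n → V →ᵃ[ℝ] ℝ) (i : Fin n) : Set V := {v | ω i v < 0}

/-- The Heaviside function `x i`: the locally constant function on `M₁(𝒜)` which is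
`1` on `H i⁺` and `0` on `H i⁻`. -/
noncomputable def heaviside (ω : Fin n → V →ᵃ[ℝ] ℝ) (i : Fin n) :
    LocallyConstant (M₁ ω) ℚ where
  toFun v := if 0 < ω i v.1 then 1 else 0
  isLocallyConstant := by
    rw [IsLocallyConstant.iff_exists_open]
    rintro ⟨v, hv⟩
    rcases lt_or_gt_of_ne (hv i) with h | h
    · refine ⟨{w : M₁ ω | ω i w.1 < 0}, ?_, h, fun w hw => ?_⟩
      · exact (isOpen_lt ((ω i).continuous_of_finiteDimensional.comp
          continuous_subtype_val) continuous_const)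
      · simp only [Set.mem_setOf_eq] at hw
        simp [not_lt.mpr hw.le, not_lt.mpr h.le]
    · refine ⟨{w : M₁ ω | 0 < ω i w.1}, ?_, h, fun w hw => ?_⟩
      · exact (isOpen_lt continuous_const ((ω i).continuous_of_finiteDimensional.comp
          continuous_subtype_val))
      · simp only [Set.mem_setOf_eq] at hw
        simp [hw, h]

/-- Family (1) of the Cordovil ideal: `e i ^ 2`. -/
def bFam1 (ι : Type*) : Set (MvPolynomial ι ℚ) := {p | ∃ i : ι, p = X i ^ 2}

/-- Family (2): `∏_{i∈S} e i` whenever `⋂_{i∈S} Z i = ∅`. -/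
def bFam2 {ι W : Type*} (Z : ι → Set W) : Set (MvPolynomial ι ℚ) :=
  {p | ∃ S : Finset ι, (⋂ i ∈ S, Z i) = ∅ ∧ p = ∏ i ∈ S, X i}

/-- Family (3): `Σ_{k∈S⁻} (∏_{i∈S⁺} e i · ∏_{j∈S⁻, j≠k} e j) -
Σ_{k∈S⁺} (∏_{i∈S⁺, i≠k} e i · ∏_{j∈S⁻} e j)` for disjoint `S⁺, S⁻` with
`⋂_{i∈S⁺} Z⁺ i ∩ ⋂_{j∈S⁻} Z⁻ j = ∅` and `⋂_{i∈S⁺∪S⁻} Z i ≠ ∅`. -/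
def bFam3 {ι W : Type*} [DecidableEq ι] (Z Zp Zm : ι → Set W) :
    Set (MvPolynomial ι ℚ) :=
  {p | ∃ Sp Sm : Finset ι, Disjoint Sp Sm ∧
    (⋂ i ∈ Sp, Zp i) ∩ (⋂ j ∈ Sm, Zm j) = ∅ ∧
    (⋂ i ∈ (Sp ∪ Sm : Finset ι), Z i) ≠ ∅ ∧
    p = (∑ k ∈ Sm, ((∏ i ∈ Sp, X i) * ∏ j ∈ Sm.erase k, X j)) -
      ∑ k ∈ Sp, ((∏ i ∈ Sp.erase k, X i) * ∏ j ∈ Sm, X j)}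

/-- The ideal `𝓘₀` defining the algebra `B(𝒜)`; the arrangement is recorded through its
hyperplanes `Z i` and open half-spaces `Zp i`, `Zm i`. -/
noncomputable def bIdeal {ι W : Type*} [DecidableEq ι] (Z Zp Zm : ι → Set W) :
    Ideal (MvPolynomial ι ℚ) :=
  Ideal.span (bFam1 ι ∪ bFam2 Z ∪ bFam3 Z Zp Zm)

/-- The algebra `B(𝒜) = ℚ[e_H : H ∈ 𝒜] / 𝓘₀`. -/
abbrev BAlg {ι W : Type*} [DecidableEq ι] (Z Zp Zm : ι → Set W) :=
  MvPolynomial ι ℚ ⧸ bIdeal Z Zp Zm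

/-- The degree-`k` graded component of `B(𝒜)` (grading by total degree in the
generators): the image of the homogeneous polynomials of degree `k`. -/
noncomputable def bGrade {ι W : Type*} [DecidableEq ι] (Z Zp Zm : ι → Set W) (k : ℕ) :
    Submodule ℚ (BAlg Z Zp Zm) :=
  Submodule.map (Ideal.Quotient.mkₐ ℚ (bIdeal Z Zp Zm)).toLinearMap
    (MvPolynomial.homogeneousSubmodule ι ℚ k)

/-- Family (1) of `𝓘`: `e i (e i - u)`. -/
def tFam1 (n : ℕ) : Set (Polynomial (MvPolynomial (Fin n) ℚ)) :=
  {p | ∃ i : Fin n, p = Polynomial.C (X i) * (Polynomial.C (X i) - Polynomial.X)}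

/-- Family (2) of `𝓘`: `∏_{i∈S⁺} e i · ∏_{j∈S⁻} (e j - u)` for disjoint `S⁺, S⁻` with
`⋂_{i∈S⁺} H i⁺ ∩ ⋂_{j∈S⁻} H j⁻ = ∅`. -/
def tFam2 (ω : Fin n → V →ᵃ[ℝ] ℝ) : Set (Polynomial (MvPolynomial (Fin n) ℚ)) :=
  {p | ∃ Sp Sm : Finset (Fin n), Disjoint Sp Sm ∧
    (⋂ i ∈ Sp, Hplus ω i) ∩ (⋂ j ∈ Sm, Hminus ω j) = ∅ ∧
    p = (∏ i ∈ Sp, Polynomial.C (X i)) * ∏ j ∈ Sm, (Polynomial.C (X j) - Polynomial.X)}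

/-- Family (3) of `𝓘`: the polynomials `q` with
`u·q = ∏_{i∈S⁺} e i ∏_{j∈S⁻} (e j - u) - ∏_{i∈S⁺} (e i - u) ∏_{j∈S⁻} e j`, for disjoint
`S⁺, S⁻` with `⋂_{i∈S⁺} H i⁺ ∩ ⋂_{j∈S⁻} H j⁻ = ∅` and `⋂_{i∈S⁺∪S⁻} H i ≠ ∅`. -/
def tFam3 (ω : Fin n → V →ᵃ[ℝ] ℝ) : Set (Polynomial (MvPolynomial (Fin n) ℚ)) :=
  {q | ∃ Sp Sm : Finset (Fin n), Disjoint Sp Sm ∧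
    (⋂ i ∈ Sp, Hplus ω i) ∩ (⋂ j ∈ Sm, Hminus ω j) = ∅ ∧
    (⋂ i ∈ (Sp ∪ Sm : Finset (Fin n)), Hyp ω i) ≠ ∅ ∧
    Polynomial.X * q =
      (∏ i ∈ Sp, Polynomial.C (X i)) * (∏ j ∈ Sm, (Polynomial.C (X j) - Polynomial.X)) -
        (∏ i ∈ Sp, (Polynomial.C (X i) - Polynomial.X)) * ∏ j ∈ Sm, Polynomial.C (X j)}

/-- The ideal `𝓘 ⊆ ℚ[e₁,…,eₙ,u]`. -/
noncomputable def tIdeal (ω : Fin n → V →ᵃ[ℝ] ℝ) :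
    Ideal (Polynomial (MvPolynomial (Fin n) ℚ)) :=
  Ideal.span (tFam1 n ∪ tFam2 ω ∪ tFam3 ω)

/-!
Write `R = ℚ[e₁,…,eₙ]`. Since `u - r` generates the kernel of the evaluation `R[u] → R`, the
quotient of `R[u]` by `𝓘 + ⟨u - r⟩` is the quotient of `R` by the image of `𝓘` under `u ↦ r`. So the
theorem amounts to computing this image: it is `𝓘₀` for `r = 0`, and the kernel of `e i ↦ x i` for
`r = 1`.

At `u = 0`, the polynomial `q_{S⁺,S⁻}` becomes minus the relation (3) of `𝓘₀`, because its constant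
term is the derivative of `u q` at `0`. Family (2) of `𝓘` becomes the monomials `∏_{S⁺ ∪ S⁻} e`. If
the hyperplanes of `S⁺ ∪ S⁻` do not meet, this is a generator of `𝓘₀`; if they do, it is, modulo
squares, plus or minus `e k` times the relation (3). Conversely, if the hyperplanes of `S` do not
meet, some combination `∑ c i ω i` is the constant `1`, and splitting `S` by the signs of the `c i`
exhibits `∏_S e` as a specialized generator of family (2).

At `u = 1`, the generators vanish on `M₁(𝒜)`; for family (3) this uses that reflection in a common
point of the hyperplanes exchanges opposite cells. Modulo `e i (e i - 1)`, every polynomial is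
`∑ T, p(T) ∏_{i∈T} e i ∏_{j∉T} (1 - e j)`, where `p(T)` is its value at the vertex `T` of the cube
`{0,1}ⁿ`. If `p` is in the kernel of `e i ↦ x i`, then `p(T) = 0` whenever the region with positive
set `T` is nonempty; when that region is empty, the idempotent of `T` is itself a generator up to
sign.
-/

open scoped Polynomial

/-! ### Specialization of a polynomial variable -/

section Specialization

variable {k R A : Type*} [CommRing k] [CommRing R] [CommRing A]

lemma ker_comp_evalRingHom {I : Ideal R[X]} {r : R} {ψ : R →+* A}
    (hI : I.map (Polynomial.evalRingHom r) = RingHom.ker ψ) :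
    RingHom.ker (ψ.comp (Polynomial.evalRingHom r)) =
      I ⊔ Ideal.span {Polynomial.X - Polynomial.C r} := by
  have hsurj : Function.Surjective (Polynomial.evalRingHom r) :=
    fun a => ⟨Polynomial.C a, by simp⟩
  rw [← RingHom.comap_ker, ← hI, Ideal.comap_map_of_surjective' _ hsurj,
    Polynomial.ker_evalRingHom]

lemma exists_quotient_sup_span_algEquiv [Algebra k R] [Algebra k A] {ψ : R →ₐ[k] A}
    (hψ : Function.Surjective ψ) {I : Ideal R[X]} {r : R} {f : R[X]}
    (hf : f = Polynomial.X - Polynomial.C r)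
    (hI : I.map (Polynomial.evalRingHom r) = RingHom.ker ψ) :
    ∃ e : (R[X] ⧸ (I ⊔ Ideal.span {f})) ≃ₐ[k] A,
      ∀ p : R[X], e (Ideal.Quotient.mk _ p) = ψ (p.eval r) := by
  let φ : R[X] →ₐ[k] A := ψ.comp ((Polynomial.aeval (R := R) r).restrictScalars k)
  have hφ : ∀ p, φ p = ψ (p.eval r) := fun p => by simp [φ]
  have hsurj : Function.Surjective φ := fun a => by
    obtain ⟨b, rfl⟩ := hψ a
    exact ⟨Polynomial.C b, by simp [hφ]⟩
  have hker : I ⊔ Ideal.span {f} = RingHom.ker φ := by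
    rw [hf, ← ker_comp_evalRingHom hI]
    ext p
    simp [RingHom.mem_ker, hφ]
  exact ⟨(Ideal.quotientEquivAlgOfEq k hker).trans
    (Ideal.quotientKerAlgEquivOfSurjective hsurj), hφ⟩

end Specialization

/-! ### Cordovil relations -/

section CordovilRelation

variable {ι R : Type*} [CommRing R]

/-- The product `u · q_{S⁺,S⁻}` that defines family (3) of `𝓘`, with `S⁺ = s`, `S⁻ = t`, the
elements `x i` in place of the generators `e i`, and the polynomial variable as `u`. -/
noncomputable def oppositeDiff (x : ι → R) (s t : Finset ι) : R[X] :=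
  (∏ i ∈ s, Polynomial.C (x i)) * (∏ j ∈ t, (Polynomial.C (x j) - Polynomial.X)) -
    (∏ i ∈ s, (Polynomial.C (x i) - Polynomial.X)) * ∏ j ∈ t, Polynomial.C (x j)

lemma X_dvd_oppositeDiff (x : ι → R) (s t : Finset ι) : Polynomial.X ∣ oppositeDiff x s t := by
  rw [Polynomial.X_dvd_iff, Polynomial.coeff_zero_eq_eval_zero]
  simp [oppositeDiff, Polynomial.eval_prod]

lemma eval_one_eq_of_X_mul_eq_oppositeDiff {x : ι → R} {s t : Finset ι} {q : R[X]}
    (hq : Polynomial.X * q = oppositeDiff x s t) :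
    q.eval 1 = (∏ i ∈ s, x i) * ∏ j ∈ t, (x j - 1) - (∏ j ∈ t, x j) * ∏ i ∈ s, (x i - 1) := by
  calc q.eval 1 = (oppositeDiff x s t).eval 1 := by simp [← hq]
    _ = _ := by simp [oppositeDiff, Polynomial.eval_prod, mul_comm (∏ j ∈ t, x j)]

lemma mul_prod_eq_zero_of_mem {x : ι → R} {s : Finset ι} {k : ι} (hx : x k ^ 2 = 0) (hk : k ∈ s) :
    x k * ∏ i ∈ s, x i = 0 := by
  classical
  rw [← Finset.mul_prod_erase s x hk, ← mul_assoc, ← sq, hx, zero_mul]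

variable [DecidableEq ι] (x : ι → R) (s t : Finset ι)

/-- The relation (3) of the Cordovil ideal `𝓘₀` attached to `S⁺ = s` and `S⁻ = t`, for elements
`x i` of any commutative ring in place of the generators `e i`. -/
def cordovilRel : R :=
  (∑ k ∈ t, ((∏ i ∈ s, x i) * ∏ j ∈ t.erase k, x j)) -
    ∑ k ∈ s, ((∏ i ∈ s.erase k, x i) * ∏ j ∈ t, x j)

lemma eval_zero_derivative_oppositeDiff :
    (Polynomial.derivative (oppositeDiff x s t)).eval 0 = -cordovilRel x s t := by
  simp only [oppositeDiff, Polynomial.derivative_sub, Polynomial.derivative_mul,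
    Polynomial.derivative_prod_finset, Polynomial.derivative_C, mul_zero, Finset.sum_const_zero,
    zero_mul, Polynomial.derivative_X, zero_sub, mul_neg, mul_one, Finset.sum_neg_distrib,
    Finset.mul_sum, zero_add, neg_mul, Finset.sum_mul, add_zero, sub_neg_eq_add,
    Polynomial.eval_add, Polynomial.eval_neg, Polynomial.eval_finsetSum, Polynomial.eval_mul,
    Polynomial.eval_prod, Polynomial.eval_C, Polynomial.eval_sub, Polynomial.eval_X, sub_zero,
    cordovilRel, neg_sub]
  ring

variable {x s t}

lemma eval_zero_eq_neg_cordovilRel {q : R[X]} (hq : Polynomial.X * q = oppositeDiff x s t) :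
    q.eval 0 = -cordovilRel x s t := by
  rw [← eval_zero_derivative_oppositeDiff, ← hq]
  simp

lemma cordovilRel_swap : cordovilRel x t s = -cordovilRel x s t := by
  simp only [cordovilRel, neg_sub, mul_comm]

lemma map_cordovilRel {S : Type*} [CommRing S] (f : R →+* S) :
    f (cordovilRel x s t) = cordovilRel (f ∘ x) s t := by
  simp [cordovilRel]

/-- Every term of the relation except `∏_{s \ k} x · ∏_t x` contains the factor `x k`. -/
lemma mul_cordovilRel_of_mem_left {k : ι} (hx : x k ^ 2 = 0) (hk : k ∈ s) :
    x k * cordovilRel x s t = -((∏ i ∈ s, x i) * ∏ j ∈ t, x j) := by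
  have hprod : x k * ∑ l ∈ t, (∏ i ∈ s, x i) * ∏ j ∈ t.erase l, x j = 0 := by
    rw [← Finset.mul_sum, ← mul_assoc, mul_prod_eq_zero_of_mem hx hk, zero_mul]
  have hsum : x k * ∑ l ∈ s, (∏ i ∈ s.erase l, x i) * ∏ j ∈ t, x j =
      (∏ i ∈ s, x i) * ∏ j ∈ t, x j := by
    rw [Finset.mul_sum, Finset.sum_eq_single_of_mem k hk, ← mul_assoc, Finset.mul_prod_erase s x hk]
    intro l _ hl
    rw [← mul_assoc, mul_prod_eq_zero_of_mem hx (Finset.mem_erase.2 ⟨hl.symm, hk⟩), zero_mul]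
  rw [cordovilRel, mul_sub, hprod, hsum, zero_sub]

lemma mul_cordovilRel_of_mem_right {k : ι} (hx : x k ^ 2 = 0) (hk : k ∈ t) :
    x k * cordovilRel x s t = (∏ i ∈ s, x i) * ∏ j ∈ t, x j := by
  rw [cordovilRel_swap, mul_neg, mul_cordovilRel_of_mem_left hx hk, neg_neg, mul_comm]

lemma prod_mul_prod_mem_of_cordovilRel_mem {J : Ideal R} (hx : ∀ i, x i ^ 2 ∈ J)
    (hne : (s ∪ t).Nonempty) (h : cordovilRel x s t ∈ J) :
    (∏ i ∈ s, x i) * ∏ j ∈ t, x j ∈ J := by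
  simp only [← Ideal.Quotient.eq_zero_iff_mem, map_cordovilRel, map_pow, map_mul, map_prod]
    at hx h ⊢
  obtain ⟨k, hk⟩ := hne
  rcases Finset.mem_union.1 hk with hk | hk
  · simpa [h] using (mul_cordovilRel_of_mem_left (x := Ideal.Quotient.mk J ∘ x) (t := t)
      (hx k) hk).symm
  · simpa [h] using (mul_cordovilRel_of_mem_right (x := Ideal.Quotient.mk J ∘ x) (s := s)
      (hx k) hk).symm

end CordovilRelation

/-! ### Interpolation on the Boolean cube -/

section BooleanCube

variable {ι R A : Type*} [Fintype ι] [DecidableEq ι] [CommRing R] [CommRing A]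

/-- For idempotents `x i`, the idempotent `∏_{i∈T} x i · ∏_{j∉T} (1 - x j)` belonging to the vertex
`T` of the cube `{0,1}^ι`. The vertex itself is encoded as the function `Set.indicator T 1`. -/
def cubeIdem (x : ι → A) (T : Finset ι) : A :=
  (∏ i ∈ T, x i) * ∏ j ∈ Tᶜ, (1 - x j)

lemma sum_cubeIdem (x : ι → A) : ∑ T, cubeIdem x T = 1 := by
  simpa [cubeIdem] using (Fintype.prod_add x (1 - x)).symm

lemma map_cubeIdem {B : Type*} [CommRing B] (f : A →+* B) (x : ι → A) (T : Finset ι) :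
    f (cubeIdem x T) = cubeIdem (f ∘ x) T := by
  simp [cubeIdem]

lemma cubeIdem_eq_neg_one_pow_mul (x : ι → A) (T : Finset ι) :
    cubeIdem x T = (-1) ^ Tᶜ.card * ((∏ i ∈ T, x i) * ∏ j ∈ Tᶜ, (x j - 1)) := by
  rw [cubeIdem, mul_left_comm, ← Finset.prod_const, ← Finset.prod_mul_distrib]
  simp

lemma cubeIdem_indicator (S T : Finset ι) :
    cubeIdem (indicator (S : Set ι) (1 : ι → R)) T = if S = T then 1 else 0 := by
  split_ifs with h
  · subst h
    rw [cubeIdem, Finset.prod_eq_one, Finset.prod_eq_one, one_mul] <;> simp +contextual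
  · rw [cubeIdem, mul_comm]
    by_cases hTS : T ⊆ S
    · obtain ⟨i, hiS, hiT⟩ := Finset.exists_of_ssubset (hTS.ssubset_of_ne (Ne.symm h))
      rw [Finset.prod_eq_zero (Finset.mem_compl.2 hiT) (by simp [hiS]), zero_mul]
    · obtain ⟨i, hiT, hiS⟩ := Finset.not_subset.1 hTS
      rw [Finset.prod_eq_zero hiT (by simp [hiS]), mul_zero]

omit [Fintype ι] [DecidableEq ι] in
lemma exists_eval_indicator_eq [Finite ι] (c : Finset ι → R) :
    ∃ p : MvPolynomial ι R, ∀ T : Finset ι, eval (indicator (T : Set ι) 1) p = c T := by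
  classical
  have := Fintype.ofFinite ι
  refine ⟨∑ S, C (c S) * cubeIdem X S, fun T => ?_⟩
  have hX : eval (indicator (T : Set ι) (1 : ι → R)) ∘ X = indicator (T : Set ι) 1 := by
    ext i
    simp
  simp [map_cubeIdem, hX, cubeIdem_indicator]

variable [Algebra R A] {x : ι → A}

lemma mul_cubeIdem {i : ι} (hx : x i * (x i - 1) = 0) (T : Finset ι) :
    x i * cubeIdem x T = indicator (T : Set ι) (1 : ι → R) i • cubeIdem x T := by
  by_cases hi : i ∈ T
  · have hxT : x i * ∏ j ∈ T, x j = ∏ j ∈ T, x j := by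
      rw [← Finset.mul_prod_erase T x hi]
      linear_combination (∏ j ∈ T.erase i, x j) * hx
    simp [cubeIdem, hi, ← mul_assoc, hxT]
  · have hxT : x i * ∏ j ∈ Tᶜ, (1 - x j) = 0 := by
      rw [← Finset.mul_prod_erase Tᶜ _ (Finset.mem_compl.2 hi)]
      linear_combination -(∏ j ∈ Tᶜ.erase i, (1 - x j)) * hx
    rw [cubeIdem, mul_left_comm, hxT]
    simp [hi]

lemma aeval_mul_cubeIdem (hx : ∀ i, x i * (x i - 1) = 0) (p : MvPolynomial ι R) (T : Finset ι) :
    aeval x p * cubeIdem x T = eval (indicator (T : Set ι) 1) p • cubeIdem x T := by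
  induction p using MvPolynomial.induction_on with
  | C a => simp [Algebra.smul_def]
  | add p q hp hq => simp only [map_add, add_mul, add_smul, hp, hq]
  | mul_X p i hp =>
    rw [map_mul, map_mul, aeval_X, eval_X, mul_assoc, mul_cubeIdem (R := R) (hx i), mul_smul_comm,
      hp, smul_smul, mul_comm]

theorem aeval_eq_sum_eval_smul_cubeIdem (hx : ∀ i, x i * (x i - 1) = 0) (p : MvPolynomial ι R) :
    aeval x p = ∑ T : Finset ι, eval (indicator (T : Set ι) 1) p • cubeIdem x T := by
  simp_rw [← aeval_mul_cubeIdem hx, ← Finset.mul_sum, sum_cubeIdem, mul_one]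

end BooleanCube

/-! ### Cells cut out by affine forms -/

section SignCell

variable {ι 𝕜 E P : Type*} [Field 𝕜] [LinearOrder 𝕜]
  [AddCommGroup E] [Module 𝕜 E] [AddTorsor E P] {ω : ι → P →ᵃ[𝕜] 𝕜} {s t : Finset ι}

/-- The open cell `⋂_{i∈s} H i⁺ ∩ ⋂_{j∈t} H j⁻` of an arrangement given by affine forms `ω i`. -/
def signCell (ω : ι → P →ᵃ[𝕜] 𝕜) (s t : Finset ι) : Set P :=
  {v | (∀ i ∈ s, 0 < ω i v) ∧ ∀ j ∈ t, ω j v < 0}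

lemma union_nonempty_of_signCell_eq_empty [DecidableEq ι] (h : signCell ω s t = ∅) :
    (s ∪ t).Nonempty := by
  obtain ⟨v⟩ := AddTorsor.nonempty (G := E) (P := P)
  have hv : v ∉ signCell ω s t := h ▸ notMem_empty v
  contrapose! hv
  simp_all [signCell, Finset.union_eq_empty]

omit [LinearOrder 𝕜] in
/-- On the homogenization `E × 𝕜`, a common zero of the homogenized forms with last coordinate
`≠ 0` would rescale to a common zero of the `ω i`; so the last coordinate is a combination of the
homogenized forms. -/
lemma exists_sum_mul_eq_one (h : ¬∃ v, ∀ i ∈ s, ω i v = 0) :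
    ∃ c : ι → 𝕜, ∀ v, ∑ i ∈ s, c i * ω i v = 1 := by
  classical
  obtain ⟨o⟩ := AddTorsor.nonempty (G := E) (P := P)
  let L : s → E × 𝕜 →ₗ[𝕜] 𝕜 := fun i => (ω i).linear.coprod (ω i o • LinearMap.id)
  have hL : ∀ (i : s) (w : E) (a : 𝕜), L i (w, a) = (ω i).linear w + ω i o * a :=
    fun i w a => by simp [L]
  have hker : ⨅ i, LinearMap.ker (L i) ≤ LinearMap.ker (LinearMap.snd 𝕜 E 𝕜) := by
    rintro ⟨w, a⟩ hw
    simp only [Submodule.mem_iInf, LinearMap.mem_ker, hL] at hw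
    by_contra ha
    replace ha : a ≠ 0 := ha
    refine h ⟨a⁻¹ • w +ᵥ o, fun i hi => ?_⟩
    rw [AffineMap.map_vadd, map_smul, vadd_eq_add, smul_eq_mul]
    linear_combination a⁻¹ * hw ⟨i, hi⟩ - ω i o * inv_mul_cancel₀ ha
  obtain ⟨c, hc⟩ := (Submodule.mem_span_range_iff_exists_fun 𝕜).1 (mem_span_of_iInf_ker_le_ker hker)
  refine ⟨fun i => if hi : i ∈ s then c ⟨i, hi⟩ else 0, fun v => ?_⟩
  have hω : ∀ i : s, L i (v -ᵥ o, 1) = ω i v := fun i => by simp [hL, AffineMap.linearMap_vsub]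
  calc _ = ∑ i : s, c i * L i (v -ᵥ o, 1) := by
        rw [← Finset.sum_coe_sort s]
        simp [hω]
    _ = 1 := by simpa using LinearMap.congr_fun hc (v -ᵥ o, 1)

variable [IsStrictOrderedRing 𝕜]

lemma exists_signCell_eq_empty [DecidableEq ι] {S : Finset ι} (h : ¬∃ v, ∀ i ∈ S, ω i v = 0) :
    ∃ s t, Disjoint s t ∧ s ∪ t = S ∧ signCell ω s t = ∅ := by
  obtain ⟨c, hc⟩ := exists_sum_mul_eq_one h
  refine ⟨{i ∈ S | c i ≤ 0}, {i ∈ S | ¬c i ≤ 0}, Finset.disjoint_filter_filter_not _ _ _,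
    Finset.filter_union_filter_not_eq _ _, eq_empty_iff_forall_notMem.2 ?_⟩
  rintro v ⟨hpos, hneg⟩
  simp only [Finset.mem_filter, not_le] at hpos hneg
  have hsum : ∑ i ∈ S, c i * ω i v ≤ 0 := Finset.sum_nonpos fun i hi => by
    rcases le_or_gt (c i) 0 with hci | hci
    · exact mul_nonpos_of_nonpos_of_nonneg hci (hpos i ⟨hi, hci⟩).le
    · exact mul_nonpos_of_nonneg_of_nonpos hci.le (hneg i ⟨hi, hci⟩).le
  exact zero_lt_one.not_ge ((hc v).symm.trans_le hsum)

omit [LinearOrder 𝕜] [IsStrictOrderedRing 𝕜] in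
lemma apply_pointReflection_of_apply_eq_zero {f : P →ᵃ[𝕜] 𝕜} {z : P} (hz : f z = 0) (v : P) :
    f (Equiv.pointReflection z v) = -f v := by
  simp [Equiv.pointReflection_apply, AffineMap.linearMap_vsub, hz]

lemma signCell_swap_eq_empty [DecidableEq ι] (hz : ∃ z, ∀ i ∈ s ∪ t, ω i z = 0)
    (h : signCell ω s t = ∅) : signCell ω t s = ∅ := by
  obtain ⟨z, hz⟩ := hz
  refine eq_empty_of_forall_notMem fun v hv => ?_
  have hrefl : Equiv.pointReflection z v ∈ signCell ω s t := by
    constructor <;> intro i hi <;> rw [apply_pointReflection_of_apply_eq_zero (hz i (by simp [hi]))]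
    · exact neg_pos.2 (hv.2 i hi)
    · exact neg_lt_zero.2 (hv.1 i hi)
  rwa [h] at hrefl

lemma convex_signCell (ω : ι → E →ᵃ[𝕜] 𝕜) (s t : Finset ι) : Convex 𝕜 (signCell ω s t) := by
  simp only [signCell, ofPred_and, ofPred_forall]
  exact (convex_iInter₂ fun i _ => (convex_Ioi 0).affine_preimage (ω i)).inter
    (convex_iInter₂ fun j _ => (convex_Iio 0).affine_preimage (ω j))

end SignCell

/-! ### The generators of the two ideals -/

section Arrangement

variable {E : Type*} [NormedAddCommGroup E] [NormedSpace ℝ E] (ω : Fin n → E →ᵃ[ℝ] ℝ)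

lemma iInter_Hplus_inter_iInter_Hminus (s t : Finset (Fin n)) :
    (⋂ i ∈ s, Hplus ω i) ∩ (⋂ j ∈ t, Hminus ω j) = signCell ω s t := by
  ext v
  simp [Hplus, Hminus, signCell]

lemma iInter_Hyp_ne_empty_iff (s : Finset (Fin n)) :
    (⋂ i ∈ s, Hyp ω i) ≠ ∅ ↔ ∃ v, ∀ i ∈ s, ω i v = 0 := by
  simp [← nonempty_iff_ne_empty, Set.Nonempty, Hyp]

lemma map_eval_tIdeal_le_iff {r : MvPolynomial (Fin n) ℚ} {J : Ideal (MvPolynomial (Fin n) ℚ)} :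
    (tIdeal ω).map (Polynomial.evalRingHom r) ≤ J ↔
      (∀ i, X i * (X i - r) ∈ J) ∧
      (∀ s t, Disjoint s t → signCell ω s t = ∅ →
        (∏ i ∈ s, X i) * ∏ j ∈ t, (X j - r) ∈ J) ∧
      ∀ s t (q : (MvPolynomial (Fin n) ℚ)[X]), Disjoint s t → signCell ω s t = ∅ →
        (∃ z, ∀ i ∈ s ∪ t, ω i z = 0) → Polynomial.X * q = oppositeDiff X s t → q.eval r ∈ J := by
  simp only [tIdeal, Ideal.map_le_iff_le_comap, Ideal.span_le, union_subset_iff, and_assoc]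
  refine and_congr ?_ (and_congr ?_ ?_)
  · simp [tFam1, Set.subset_def]
  · constructor
    · intro h s t hd he
      simpa [Polynomial.eval_prod] using
        h ⟨s, t, hd, (iInter_Hplus_inter_iInter_Hminus ω s t).trans he, rfl⟩
    · rintro h _ ⟨s, t, hd, he, rfl⟩
      simpa [Polynomial.eval_prod] using
        h s t hd ((iInter_Hplus_inter_iInter_Hminus ω s t).symm.trans he)
  · constructor
    · intro h s t q hd he hz hq
      exact h ⟨s, t, hd, (iInter_Hplus_inter_iInter_Hminus ω s t).trans he,
        (iInter_Hyp_ne_empty_iff ω _).2 hz, hq⟩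
    · rintro h q ⟨s, t, hd, he, hz, hq⟩
      exact h s t q hd ((iInter_Hplus_inter_iInter_Hminus ω s t).symm.trans he)
        ((iInter_Hyp_ne_empty_iff ω _).1 hz) hq

lemma bIdeal_le_iff {J : Ideal (MvPolynomial (Fin n) ℚ)} :
    bIdeal (Hyp ω) (Hplus ω) (Hminus ω) ≤ J ↔
      (∀ i, X i ^ 2 ∈ J) ∧
      (∀ S : Finset (Fin n), (¬∃ z, ∀ i ∈ S, ω i z = 0) → ∏ i ∈ S, X i ∈ J) ∧
      ∀ s t, Disjoint s t → signCell ω s t = ∅ → (∃ z, ∀ i ∈ s ∪ t, ω i z = 0) →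
        cordovilRel X s t ∈ J := by
  simp only [bIdeal, Ideal.span_le, union_subset_iff, and_assoc]
  refine and_congr ?_ (and_congr ?_ ?_)
  · simp [bFam1, Set.subset_def]
  · simp only [← iInter_Hyp_ne_empty_iff, not_not]
    exact ⟨fun h S hS => h ⟨S, hS, rfl⟩, fun h _ ⟨S, hS, hp⟩ => hp ▸ h S hS⟩
  · simp only [← iInter_Hyp_ne_empty_iff, ← iInter_Hplus_inter_iInter_Hminus]
    exact ⟨fun h s t hd he hz => h ⟨s, t, hd, he, hz, rfl⟩,
      fun h _ ⟨s, t, hd, he, hz, hp⟩ => hp ▸ h s t hd he hz⟩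

theorem map_eval_zero_tIdeal :
    (tIdeal ω).map (Polynomial.evalRingHom 0) = bIdeal (Hyp ω) (Hplus ω) (Hminus ω) := by
  refine eq_of_forall_ge_iff fun J => ?_
  rw [map_eval_tIdeal_le_iff, bIdeal_le_iff]
  simp only [sub_zero, ← sq]
  refine and_congr_right fun hsq => ⟨?_, ?_⟩
  · rintro ⟨hprod, hq⟩
    refine ⟨fun S hS => ?_, fun s t hd he hz => ?_⟩
    · obtain ⟨s, t, hd, rfl, he⟩ := exists_signCell_eq_empty hS
      simpa [Finset.prod_union hd] using hprod s t hd he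
    · obtain ⟨q, hqX⟩ := X_dvd_oppositeDiff (X : Fin n → MvPolynomial (Fin n) ℚ) s t
      simpa [eval_zero_eq_neg_cordovilRel hqX.symm] using hq s t q hd he hz hqX.symm
  · rintro ⟨hprod, hrel⟩
    refine ⟨fun s t hd he => ?_, fun s t q hd he hz hqX => ?_⟩
    · by_cases hz : ∃ z, ∀ i ∈ s ∪ t, ω i z = 0
      · exact prod_mul_prod_mem_of_cordovilRel_mem hsq (union_nonempty_of_signCell_eq_empty he)
          (hrel s t hd he hz)
      · simpa [Finset.prod_union hd] using hprod (s ∪ t) hz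
    · simpa [eval_zero_eq_neg_cordovilRel hqX] using hrel s t hd he hz

end Arrangement

/-! ### Regions and Heaviside functions -/

section Region

variable {ι P 𝕜 E : Type*} [Fintype ι] [Field 𝕜] [LinearOrder 𝕜]
  [AddCommGroup E] [Module 𝕜 E] [AddTorsor E P]

/-- The set of indices `i` with `v ∈ H i⁺`. Off the hyperplanes it determines the signs of all
`ω i v`, and it serves as the label of the region containing `v`. -/
def posSet (ω : ι → P →ᵃ[𝕜] 𝕜) (v : P) : Finset ι := {i | 0 < ω i v}

@[simp]
lemma mem_posSet {ω : ι → P →ᵃ[𝕜] 𝕜} {v : P} {i : ι} : i ∈ posSet ω v ↔ 0 < ω i v := by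
  simp [posSet]

lemma mem_signCell_posSet [DecidableEq ι] {ω : ι → P →ᵃ[𝕜] 𝕜} {v : P}
    (hv : ∀ i, ω i v ≠ 0) :
    v ∈ signCell ω (posSet ω v) (posSet ω v)ᶜ :=
  ⟨fun i hi => mem_posSet.1 hi,
    fun i hi => (hv i).lt_of_le (by simpa using hi)⟩

lemma posSet_eq_of_mem_signCell [DecidableEq ι] {ω : ι → P →ᵃ[𝕜] 𝕜} {v : P} {T : Finset ι}
    (hv : v ∈ signCell ω T Tᶜ) : posSet ω v = T := by
  ext i
  rw [mem_posSet]
  refine ⟨fun hi => ?_, hv.1 i⟩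
  by_contra hiT
  exact lt_asymm hi (hv.2 i (Finset.mem_compl.2 hiT))

end Region

lemma apply_eq_of_isPreconnected_subset {X Y : Type*} [TopologicalSpace X] {M C : Set X}
    (f : LocallyConstant M Y) (hC : IsPreconnected C) (hCM : C ⊆ M) {v w : M} (hv : v.1 ∈ C)
    (hw : w.1 ∈ C) : f v = f w := by
  refine f.apply_eq_of_isPreconnected (s := (Subtype.val ⁻¹' C : Set M)) ?_ hv hw
  rwa [← Topology.IsInducing.subtypeVal.isPreconnected_image, Subtype.image_preimage_coe,
    inter_eq_right.2 hCM]

section Complement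

variable {E : Type*} [NormedAddCommGroup E] [NormedSpace ℝ E] {ω : Fin n → E →ᵃ[ℝ] ℝ}

lemma signCell_compl_subset_M₁ (T : Finset (Fin n)) : signCell ω T Tᶜ ⊆ M₁ ω := by
  intro v hv i
  by_cases hi : i ∈ T
  · exact (hv.1 i hi).ne'
  · exact (hv.2 i (Finset.mem_compl.2 hi)).ne

lemma apply_eq_of_posSet_eq {Y : Type*} (f : LocallyConstant (M₁ ω) Y) {v w : M₁ ω}
    (h : posSet ω v.1 = posSet ω w.1) : f v = f w :=
  apply_eq_of_isPreconnected_subset f (convex_signCell ω _ _).isPreconnected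
    (signCell_compl_subset_M₁ _) (h ▸ mem_signCell_posSet v.2) (mem_signCell_posSet w.2)

lemma eval_indicator_posSet_prod_eq_zero {v : E} (hv : v ∈ M₁ ω) {s t : Finset (Fin n)}
    (h : signCell ω s t = ∅) :
    eval (indicator (posSet ω v : Set (Fin n)) 1)
      ((∏ i ∈ s, X i) * ∏ j ∈ t, (X j - 1) : MvPolynomial (Fin n) ℚ) = 0 := by
  have hvs : v ∉ signCell ω s t := h ▸ notMem_empty v
  contrapose! hvs
  simp only [map_mul, map_prod, map_sub, map_one, eval_X, mul_ne_zero_iff, Finset.prod_ne_zero_iff]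
    at hvs
  refine ⟨fun i hi => ?_, fun j hj => (hv j).lt_of_le ?_⟩
  · simpa using hvs.1 i hi
  · simpa [sub_eq_zero, indicator_apply] using hvs.2 j hj

end Complement

section Heaviside

variable (ω : Fin n → V →ᵃ[ℝ] ℝ)

lemma aeval_heaviside_apply (p : MvPolynomial (Fin n) ℚ) (v : M₁ ω) :
    aeval (heaviside ω) p v = eval (indicator (posSet ω v.1 : Set (Fin n)) 1) p := by
  have hx : ∀ i, LocallyConstant.evalₐ ℚ v (heaviside ω i) =
      indicator (posSet ω v.1 : Set (Fin n)) 1 i := fun i => by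
    simp [heaviside, indicator_apply]
  calc aeval (heaviside ω) p v
      = LocallyConstant.evalₐ ℚ v (aeval (heaviside ω) p) := rfl
    _ = eval (indicator (posSet ω v.1 : Set (Fin n)) 1) p := by
      rw [comp_aeval_apply]
      simp only [hx]
      rfl

lemma mem_ker_aeval_heaviside_iff {p : MvPolynomial (Fin n) ℚ} :
    p ∈ RingHom.ker (aeval (R := ℚ) (heaviside ω)) ↔
      ∀ v ∈ M₁ ω, eval (indicator (posSet ω v : Set (Fin n)) 1) p = 0 := by
  simp [RingHom.mem_ker, LocallyConstant.ext_iff, aeval_heaviside_apply]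

theorem aeval_heaviside_surjective : Function.Surjective (aeval (R := ℚ) (heaviside ω)) := by
  intro f
  have hf : f.toFun.FactorsThrough fun v : M₁ ω => posSet ω v.1 :=
    fun _ _ h => apply_eq_of_posSet_eq f h
  obtain ⟨p, hp⟩ := exists_eval_indicator_eq
    (Function.extend (fun v : M₁ ω => posSet ω v.1) f.toFun 0)
  refine ⟨p, LocallyConstant.ext fun v => ?_⟩
  rw [aeval_heaviside_apply, hp]
  exact hf.extend_apply 0 v

lemma map_eval_one_tIdeal_le_ker :
    (tIdeal ω).map (Polynomial.evalRingHom 1) ≤ RingHom.ker (aeval (R := ℚ) (heaviside ω)) := by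
  refine (map_eval_tIdeal_le_iff ω).2 ⟨fun i => ?_, fun s t _ he => ?_, fun s t q _ he hz hq => ?_⟩
    <;> refine (mem_ker_aeval_heaviside_iff ω).2 fun v hv => ?_
  · by_cases hi : 0 < ω i v <;> simp [hi]
  · exact eval_indicator_posSet_prod_eq_zero hv he
  · rw [eval_one_eq_of_X_mul_eq_oppositeDiff hq, map_sub, eval_indicator_posSet_prod_eq_zero hv he,
      eval_indicator_posSet_prod_eq_zero hv (signCell_swap_eq_empty hz he), sub_zero]

lemma ker_aeval_heaviside_le_map_eval_one :
    RingHom.ker (aeval (R := ℚ) (heaviside ω)) ≤ (tIdeal ω).map (Polynomial.evalRingHom 1) := by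
  intro p hp
  rw [mem_ker_aeval_heaviside_iff] at hp
  set J := (tIdeal ω).map (Polynomial.evalRingHom 1)
  obtain ⟨hidem, hcell, -⟩ := (map_eval_tIdeal_le_iff ω (J := J)).1 le_rfl
  let x : Fin n → MvPolynomial (Fin n) ℚ ⧸ J := fun i => Ideal.Quotient.mk J (X i)
  have hx : ∀ i, x i * (x i - 1) = 0 := fun i => Ideal.Quotient.eq_zero_iff_mem.2 (hidem i)
  have hempty : ∀ T, signCell ω T Tᶜ = ∅ → cubeIdem x T = 0 := fun T hT => by
    have hJ : cubeIdem X T ∈ J := by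
      rw [cubeIdem_eq_neg_one_pow_mul]
      exact J.mul_mem_left _ (hcell T Tᶜ disjoint_compl_right hT)
    exact (map_cubeIdem _ X T).symm.trans (Ideal.Quotient.eq_zero_iff_mem.2 hJ)
  have hmk : Ideal.Quotient.mk J p = aeval x p := by
    simpa using comp_aeval_apply X (Ideal.Quotient.mkₐ ℚ J) p
  rw [← Ideal.Quotient.eq_zero_iff_mem, hmk, aeval_eq_sum_eval_smul_cubeIdem hx]
  refine Finset.sum_eq_zero fun T _ => ?_
  obtain hT | ⟨v, hv⟩ := (signCell ω T Tᶜ).eq_empty_or_nonempty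
  · rw [hempty T hT, smul_zero]
  · have hpT := hp v (signCell_compl_subset_M₁ T hv)
    rw [posSet_eq_of_mem_signCell hv] at hpT
    rw [hpT, zero_smul]

theorem map_eval_one_tIdeal :
    (tIdeal ω).map (Polynomial.evalRingHom 1) = RingHom.ker (aeval (R := ℚ) (heaviside ω)) :=
  le_antisymm (map_eval_one_tIdeal_le_ker ω) (ker_aeval_heaviside_le_map_eval_one ω)

end Heaviside

/-- (a) Evaluation `u ↦ 0` induces a `ℚ`-algebra isomorphism
`ℚ[e,u]/(𝓘 + ⟨u⟩) ≅ B(𝒜)`; (b) evaluation `u ↦ 1` induces a `ℚ`-algebra isomorphism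
`ℚ[e,u]/(𝓘 + ⟨u - 1⟩) ≅ H⁰(M₁(𝒜))` sending `e i` to the Heaviside function `x i`. -/
theorem tIdeal_specializations (ω : Fin n → V →ᵃ[ℝ] ℝ) (hω : ∀ i, (ω i).linear ≠ 0) :
    (∃ f : (Polynomial (MvPolynomial (Fin n) ℚ) ⧸
          (tIdeal ω ⊔ Ideal.span {Polynomial.X})) ≃ₐ[ℚ]
        BAlg (Hyp ω) (Hplus ω) (Hminus ω),
      ∀ p : Polynomial (MvPolynomial (Fin n) ℚ),
        f (Ideal.Quotient.mk _ p) =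
          Ideal.Quotient.mk (bIdeal (Hyp ω) (Hplus ω) (Hminus ω)) (p.eval 0)) ∧
    (∃ g : (Polynomial (MvPolynomial (Fin n) ℚ) ⧸
          (tIdeal ω ⊔ Ideal.span {Polynomial.X - 1})) ≃ₐ[ℚ]
        LocallyConstant (M₁ ω) ℚ,
      ∀ p : Polynomial (MvPolynomial (Fin n) ℚ),
        g (Ideal.Quotient.mk _ p) = MvPolynomial.aeval (heaviside ω) (p.eval 1)) := by
  constructor
  · exact exists_quotient_sup_span_algEquiv (Ideal.Quotient.mkₐ_surjective ℚ _) (by simp)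
      ((map_eval_zero_tIdeal ω).trans (Ideal.Quotient.mkₐ_ker ℚ _).symm)
  · exact exists_quotient_sup_span_algEquiv (aeval_heaviside_surjective ω) (by simp)
      (map_eval_one_tIdeal ω)
end

section
/- For each unit complex number z = a + bi (a² + b² = 1), let z act on V × V × V by z·(v₁, v₂, v₃) = (v₁, a·v₂ − b·v₃, b·v₂ + a·v₃). This defines an action of the circle group on V × V × V, the subset M₃(𝒜) is invariant under this action, and the set of points of M₃(𝒜) fixed by every element of the circle is exactly {(v, 0, 0) : v ∈ M₁(𝒜)}. -/
/-!
On the last two coordinates `circleAct` is scalar multiplication on the complexification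
`V ⊕ iV`. Multiplicativity is part of the `ℂ`-algebra structure, and the linear forms `ω̄ᵢ`
extend complex-linearly, so for `z ≠ 0` the vanishing of `(ω̄ᵢ v₂, ω̄ᵢ v₃)` is unaffected by `z`,
which gives invariance of `M₃(𝒜)`. A single `z ≠ 1` already fixes only points with `v₂ = v₃ = 0`,
because `z x = x` says `(z - 1) x = 0`.
-/

/-!
Statement 14: the circle action on `M₃(𝒜)` by rotation in the last two coordinates,
and its fixed-point set `M₁(𝒜)`.
-/

open Set

variable {V : Type*} [NormedAddCommGroup V] [NormedSpace ℝ V] [FiniteDimensional ℝ V]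
variable {n : ℕ}

/-- The complement `M₃(𝒜) ⊆ V × V × V`: the set of `(v₁,v₂,v₃)` such that for every
`i`, `ω_{i,3}(v₁,v₂,v₃) = (ωᵢ v₁, ω̄ᵢ v₂, ω̄ᵢ v₃) ≠ (0,0,0)`. -/
def M₃ (ω : Fin n → V →ᵃ[ℝ] ℝ) : Set (V × V × V) :=
  {p | ∀ i, ¬(ω i p.1 = 0 ∧ (ω i).linear p.2.1 = 0 ∧ (ω i).linear p.2.2 = 0)}

/-- The action of the unit complex number `z = a + bi` on `V × V × V`:
`z·(v₁,v₂,v₃) = (v₁, a·v₂ - b·v₃, b·v₂ + a·v₃)`. -/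
def circleAct (z : ℂ) (p : V × V × V) : V × V × V :=
  (p.1, z.re • p.2.1 - z.im • p.2.2, z.im • p.2.1 + z.re • p.2.2)

section Complexification

variable {E F : Type*} [AddCommGroup E] [Module ℝ E] [AddCommGroup F] [Module ℝ F]

/-- Multiplication by `i` on the complexification `E ⊕ iE`, encoded as `E × E`. -/
def complexificationI (E : Type*) [AddCommGroup E] [Module ℝ E] : Module.End ℝ (E × E) :=
  (-LinearMap.snd ℝ E E).prod (LinearMap.fst ℝ E E)

theorem complexificationI_mul_self : complexificationI E * complexificationI E = -1 :=
  LinearMap.ext fun _ => rfl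

/-- Scalar multiplication of `ℂ` on the complexification `E ⊕ iE`, encoded as `E × E`. It is an
algebra homomorphism rather than a `Module ℂ (E × E)` instance because, for a complex space `E`,
the latter would conflict with the componentwise one. -/
noncomputable def complexificationSMul (E : Type*) [AddCommGroup E] [Module ℝ E] :
    ℂ →ₐ[ℝ] Module.End ℝ (E × E) :=
  Complex.liftAux (complexificationI E) complexificationI_mul_self

theorem complexificationSMul_apply (z : ℂ) (x : E × E) :
    complexificationSMul E z x = (z.re • x.1 - z.im • x.2, z.im • x.1 + z.re • x.2) := by
  ext <;> simp [complexificationSMul, complexificationI, Complex.liftAux_apply,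
    Module.algebraMap_end_apply, sub_eq_add_neg, add_comm]

theorem prodMap_complexificationSMul (f : E →ₗ[ℝ] F) (z : ℂ) (x : E × E) :
    f.prodMap f (complexificationSMul E z x) = complexificationSMul F z (f.prodMap f x) := by
  simp only [complexificationSMul_apply, LinearMap.prodMap_apply, map_sub, map_add, map_smul]

theorem complexificationSMul_eq_zero_iff {z : ℂ} (hz : z ≠ 0) {x : E × E} :
    complexificationSMul E z x = 0 ↔ x = 0 :=
  have h_unit : IsUnit (complexificationSMul E z) := hz.isUnit.map _
  map_eq_zero_iff _ ((Module.End.isUnit_iff _).mp h_unit).injective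

theorem complexificationSMul_eq_self_iff {z : ℂ} (hz : z ≠ 1) {x : E × E} :
    complexificationSMul E z x = x ↔ x = 0 := by
  rw [← complexificationSMul_eq_zero_iff (sub_ne_zero.mpr hz), map_sub, map_one,
    LinearMap.sub_apply, Module.End.one_apply, sub_eq_zero]

end Complexification

section CircleAction

variable {E : Type*} [NormedAddCommGroup E] [NormedSpace ℝ E]

theorem circleAct_eq_complexificationSMul (z : ℂ) (p : E × E × E) :
    circleAct z p = (p.1, complexificationSMul E z p.2) := by
  rw [circleAct, complexificationSMul_apply]

theorem circleAct_one : circleAct (V := E) 1 = id := by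
  ext1 p
  rw [circleAct_eq_complexificationSMul, map_one, Module.End.one_apply, id]

theorem circleAct_mul (z w : ℂ) : circleAct (V := E) (z * w) = circleAct z ∘ circleAct w := by
  ext1 p
  simp only [Function.comp_apply, circleAct_eq_complexificationSMul, map_mul, Module.End.mul_apply]

theorem circleAct_eq_self_iff {z : ℂ} (hz : z ≠ 1) {p : E × E × E} :
    circleAct z p = p ↔ p.2 = 0 := by
  rw [circleAct_eq_complexificationSMul, Prod.ext_iff, eq_self, true_and,
    complexificationSMul_eq_self_iff hz]

theorem circleAct_eq_self_of_snd_eq_zero (z : ℂ) {p : E × E × E} (hp : p.2 = 0) :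
    circleAct z p = p := by
  rw [circleAct_eq_complexificationSMul, hp, map_zero, ← hp]

theorem mem_M₃_iff {ω : Fin n → E →ᵃ[ℝ] ℝ} {p : E × E × E} :
    p ∈ M₃ ω ↔ ∀ i, ¬(ω i p.1 = 0 ∧ (ω i).linear.prodMap (ω i).linear p.2 = 0) := by
  simp only [M₃, mem_ofPred_eq, LinearMap.prodMap_apply, Prod.mk_eq_zero]

theorem mem_M₃_iff_of_snd_eq_zero {ω : Fin n → E →ᵃ[ℝ] ℝ} {p : E × E × E} (hp : p.2 = 0) :
    p ∈ M₃ ω ↔ p.1 ∈ M₁ ω := by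
  simp only [mem_M₃_iff, hp, map_zero, and_true, M₁, mem_ofPred_eq, ne_eq]

theorem circleAct_mem_M₃_iff {ω : Fin n → E →ᵃ[ℝ] ℝ} {z : ℂ} (hz : z ≠ 0) {p : E × E × E} :
    circleAct z p ∈ M₃ ω ↔ p ∈ M₃ ω := by
  simp only [mem_M₃_iff, circleAct_eq_complexificationSMul, prodMap_complexificationSMul,
    complexificationSMul_eq_zero_iff hz]

theorem fixedPoints_circleAct_M₃ (ω : Fin n → E →ᵃ[ℝ] ℝ) {S : Set ℂ} (hS : ∃ z ∈ S, z ≠ 1) :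
    {p ∈ M₃ ω | ∀ z ∈ S, circleAct z p = p} =
      {p : E × E × E | p.1 ∈ M₁ ω ∧ p.2.1 = 0 ∧ p.2.2 = 0} := by
  obtain ⟨z, hzS, hz⟩ := hS
  ext p
  have h_fixed : (∀ w ∈ S, circleAct w p = p) ↔ p.2 = 0 :=
    ⟨fun h => (circleAct_eq_self_iff hz).mp (h z hzS),
      fun hp w _ => circleAct_eq_self_of_snd_eq_zero w hp⟩
  rw [mem_ofPred_eq, mem_ofPred_eq, h_fixed, and_congr_left mem_M₃_iff_of_snd_eq_zero,
    Prod.ext_iff, Prod.fst_zero, Prod.snd_zero]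

end CircleAction

theorem circle_action_on_M₃_general {E : Type*} [NormedAddCommGroup E] [NormedSpace ℝ E]
    (ω : Fin n → E →ᵃ[ℝ] ℝ) :
    circleAct (V := E) 1 = id ∧
    (∀ z w : ℂ, circleAct (V := E) (z * w) = circleAct z ∘ circleAct w) ∧
    (∀ z : ℂ, z ≠ 0 → ∀ p, circleAct z p ∈ M₃ ω ↔ p ∈ M₃ ω) ∧
    (∀ S : Set ℂ, (∃ z ∈ S, z ≠ 1) → {p ∈ M₃ ω | ∀ z ∈ S, circleAct z p = p} =
      {p : E × E × E | p.1 ∈ M₁ ω ∧ p.2.1 = 0 ∧ p.2.2 = 0}) :=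
  ⟨circleAct_one, circleAct_mul, fun _ hz _ => circleAct_mem_M₃_iff hz,
    fun _ hS => fixedPoints_circleAct_M₃ ω hS⟩

/-- The maps `circleAct z` for unit `z` define an action of the
circle group on `V × V × V`, `M₃(𝒜)` is invariant, and the fixed-point set of the
circle on `M₃(𝒜)` is exactly `{(v,0,0) : v ∈ M₁(𝒜)}`. -/
theorem circle_action_on_M₃ (ω : Fin n → V →ᵃ[ℝ] ℝ) (hω : ∀ i, (ω i).linear ≠ 0) :
    circleAct (V := V) 1 = id ∧
    (∀ z w : ℂ, z.re ^ 2 + z.im ^ 2 = 1 → w.re ^ 2 + w.im ^ 2 = 1 →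
      circleAct (V := V) (z * w) = circleAct z ∘ circleAct w) ∧
    (∀ z : ℂ, z.re ^ 2 + z.im ^ 2 = 1 → ∀ p ∈ M₃ ω, circleAct z p ∈ M₃ ω) ∧
    {p ∈ M₃ ω | ∀ z : ℂ, z.re ^ 2 + z.im ^ 2 = 1 → circleAct z p = p} =
      {p : V × V × V | p.1 ∈ M₁ ω ∧ p.2.1 = 0 ∧ p.2.2 = 0} := by
  obtain ⟨h_one, h_mul, h_inv, h_fixed⟩ := circle_action_on_M₃_general ω
  exact ⟨h_one, fun z w _ _ => h_mul z w, fun z hz p => (h_inv z (by rintro rfl; simp at hz) p).mpr,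
    h_fixed {z | z.re ^ 2 + z.im ^ 2 = 1} ⟨-1, by simp, by norm_num⟩⟩
end
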